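/- Let Ω ⊂ ℝ^d be compact and convex with non-negligible interior, μ, ν ∈ 𝒫(Ω) with μ absolutely continuous with respect to Lebesgue measure, λ > 0, and let ρ_λ be the unique solution of the WROF problem. Then: (1) if ν ∈ B_λ(μ), then ρ_λ = ν; (2) if ν ∉ B_λ(μ), then ρ_λ ≠ ν, and any solution φ_λ of sup_{φ ∈ λ-Lip(Ω)} ∫_Ω φ^{c₂} dμ + ∫_Ω φ dν satisfies φ_λ ∈ ∂((1/2)W₂²(·,μ))(ρ_λ), has Lipschitz constant exactly λ, and satisfies ∫_Ω φ_λ d(ν − ρ_λ) = λ W₁(ρ_λ, ν). Moreover, the map T_λ (equal μ-a.e. to I − ∇φ_λ^{c₂}) is the unique optimal transport map for W₂(μ, ρ_λ) and satisfies ‖I − T_λ‖_{L∞(μ)} ≤ λ. -/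

import Mathlib

/-!
The Huber cost is the infimal convolution of `c₂` and `λ|·|`: the point of `[x,z]` at distance
`min |x-z| λ` from `x` realises `huber λ x z` as `c₂(x,y) + λ|y-z|` (`midPt_cost`). Pushing a plan
from `μ` to `ν` onto these points, which stay in the convex set `Ω`, gives a measure whose WROF
energy is at most the Huber cost of the plan (`exists_wrof_le_huber`).

Kantorovich duality for continuous costs on a compact space is proved by Hahn–Banach and the
Riesz–Markov–Kakutani theorem (`exists_plan_dual`), which also gives existence of optimal plans.
For the Huber cost, the dual potentials may be replaced by pairs `(φ^{c₂}, φ)` with `φ`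
`λ`-Lipschitz (`exists_huber_plan_le_dual`). For a dual solution `φ` and a WROF minimiser `ρ` this
gives the chain
`wrof ρ ≤ 𝓘_{c_{2,λ}}(μ,ν) ≤ ∫ φ^{c₂} dμ + ∫ φ dν ≤ wrof ρ`,
whose last inequality is the sum of the weak duality bounds for `W₂²/2` and `λ W₁`. Both bounds are
therefore equalities (`optimality`).

Consequently every optimal plan from `μ` to `ρ` is concentrated on the contact set
`φ^{c₂}(x) + φ(y) = c₂(x,y)`. Since `φ^{c₂}` is locally Lipschitz and `μ` is absolutely continuous,
Rademacher's theorem shows that this set is, up to a null set, the graph of `I - ∇φ^{c₂}`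
(`plan_ae_graph`). Hence the optimal map and the minimiser `ρ` are unique. The displacement bound
holds because a minimiser of `c₂(x,·) - φ` at distance more than `λ` from `x` could be improved by
moving it towards `x` (`norm_sub_le_of_min`). The dichotomy follows by comparing `ν` with the
unique minimiser (`eq_of_Bset`, `Bset_of_min`), using that a dual solution exists by
Arzelà–Ascoli (`exists_dualSol`). If `ρ ≠ ν` then `W₁(ρ,ν) > 0`, so the equality
`∫ φ d(ν - ρ) = λ W₁(ρ,ν)` rules out any Lipschitz constant below `λ`.
-/

open MeasureTheory Filter Topology

noncomputable section

abbrev Ed (d : ℕ) := EuclideanSpace ℝ (Fin d)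

variable {d : ℕ}

/-- `γ` is a coupling (transport plan) between `μ` and `ν`. -/
def IsCoupling (μ ν : Measure (Ed d)) (γ : Measure (Ed d × Ed d)) : Prop :=
  γ.map Prod.fst = μ ∧ γ.map Prod.snd = ν

/-- The optimal transport cost `𝓘_c(μ,ν)` for the pointwise cost `c`. -/
def tCost (c : Ed d → Ed d → ℝ) (μ ν : Measure (Ed d)) : ℝ :=
  sInf {r | ∃ γ : Measure (Ed d × Ed d), IsCoupling μ ν γ ∧ r = ∫ p, c p.1 p.2 ∂γ}

/-- The Wasserstein-1 distance. -/
def W1 (μ ν : Measure (Ed d)) : ℝ := tCost (fun x y => ‖x - y‖) μ ν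

/-- The squared Wasserstein-2 distance `W₂²(μ,ν)`. -/
def W2sq (μ ν : Measure (Ed d)) : ℝ := tCost (fun x y => ‖x - y‖ ^ 2) μ ν

/-- The quadratic cost `c₂(x,y) = |x-y|²/2`. -/
def c2 (x y : Ed d) : ℝ := ‖x - y‖ ^ 2 / 2

/-- The Huber cost `c_{2,λ}`. -/
def huber (lam : ℝ) (x y : Ed d) : ℝ :=
  if ‖x - y‖ ≤ lam then ‖x - y‖ ^ 2 / 2 else lam * ‖x - y‖ - lam ^ 2 / 2

/-- The `c`-transform on `Ω`: `φ^c(x) = inf_{y ∈ Ω} c(x,y) - φ(y)`. -/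
def ctrans (c : Ed d → Ed d → ℝ) (Ω : Set (Ed d)) (φ : Ed d → ℝ) (x : Ed d) : ℝ :=
  sInf ((fun y => c x y - φ y) '' Ω)

/-- A Borel probability measure concentrated on `Ω`. -/
def ProbOn (Ω : Set (Ed d)) (μ : Measure (Ed d)) : Prop :=
  IsProbabilityMeasure μ ∧ μ Ωᶜ = 0

/-- `γ` is an optimal transport plan between `μ` and `ν` for cost `c`. -/
def IsOptimalPlan (c : Ed d → Ed d → ℝ) (μ ν : Measure (Ed d))
    (γ : Measure (Ed d × Ed d)) : Prop :=
  IsCoupling μ ν γ ∧ ∀ γ' : Measure (Ed d × Ed d), IsCoupling μ ν γ' →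
    ∫ p, c p.1 p.2 ∂γ ≤ ∫ p, c p.1 p.2 ∂γ'

/-- `T` is an optimal transport map from `μ` to `ν` for cost `c`. -/
def IsOptimalMap (c : Ed d → Ed d → ℝ) (μ ν : Measure (Ed d)) (T : Ed d → Ed d) : Prop :=
  AEMeasurable T μ ∧ μ.map T = ν ∧
    ∀ γ : Measure (Ed d × Ed d), IsCoupling μ ν γ →
      ∫ x, c x (T x) ∂μ ≤ ∫ p, c p.1 p.2 ∂γ

/-- The WROF functional `(1/2) W₂²(μ,ρ) + λ W₁(ρ,ν)`. -/
def wrof (lam : ℝ) (μ ν ρ : Measure (Ed d)) : ℝ := W2sq μ ρ / 2 + lam * W1 ρ ν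

/-- `ρ ∈ B_λ(μ)`: there exists an optimal plan for the Huber cost `c_{2,λ}` from `μ` to `ρ`
supported in `{|x-y| ≤ λ}`. -/
def Bset (lam : ℝ) (μ ρ : Measure (Ed d)) : Prop :=
  ∃ γ : Measure (Ed d × Ed d), IsOptimalPlan (huber lam) μ ρ γ ∧
    γ {p : Ed d × Ed d | lam < ‖p.1 - p.2‖} = 0

/-- `φ` solves the dual problem `sup_{φ ∈ λ-Lip(Ω)} ∫ φ^{c₂} dμ + ∫ φ dν`. -/
def DualSol (Ω : Set (Ed d)) (lam : ℝ) (μ ν : Measure (Ed d)) (φ : Ed d → ℝ) : Prop :=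
  LipschitzOnWith (Real.toNNReal lam) φ Ω ∧
    ∀ ψ : Ed d → ℝ, LipschitzOnWith (Real.toNNReal lam) ψ Ω →
      (∫ x, ctrans c2 Ω ψ x ∂μ) + ∫ x, ψ x ∂ν ≤ (∫ x, ctrans c2 Ω φ x ∂μ) + ∫ x, φ x ∂ν

/-- `φ ∈ ∂((1/2)W₂²(·,μ))(ρ)`, i.e. `φ ∈ C(Ω)` with `∫φ^{c₂}dμ + ∫φ dρ = (1/2)W₂²(ρ,μ)`. -/
def InSubdiffW2 (Ω : Set (Ed d)) (μ ρ : Measure (Ed d)) (φ : Ed d → ℝ) : Prop :=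
  ContinuousOn φ Ω ∧ (∫ x, ctrans c2 Ω φ x ∂μ) + ∫ x, φ x ∂ρ = W2sq ρ μ / 2

/-- The divergence `D_λ(ν,ρ)` with reference measure `μ`. -/
def Dlam (Ω : Set (Ed d)) (lam : ℝ) (μ ν ρ : Measure (Ed d)) : EReal :=
  ((W2sq ν μ / 2 : ℝ) : EReal) - ((W2sq ρ μ / 2 : ℝ) : EReal) -
    ⨆ φ ∈ {φ : Ed d → ℝ | InSubdiffW2 Ω μ ρ φ ∧ LipschitzOnWith (Real.toNNReal lam) φ Ω},
      (((∫ x, φ x ∂ν) - ∫ x, φ x ∂ρ : ℝ) : EReal)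

/-- `φ` is `c`-concave on `Ω`: `φ = ψ^c` for some `ψ`. -/
def CConcaveOn (c : Ed d → Ed d → ℝ) (Ω : Set (Ed d)) (φ : Ed d → ℝ) : Prop :=
  ∃ ψ : Ed d → ℝ, ∀ x ∈ Ω, φ x = ctrans c Ω ψ x

/-- The (topological) support of a measure. -/
def msupport {α : Type*} [TopologicalSpace α] [MeasurableSpace α] (γ : Measure α) : Set α :=
  {p | ∀ U : Set α, IsOpen U → p ∈ U → γ U ≠ 0}

/-! ### Kantorovich duality on a compact metric space -/

/-- The least value `∫ f dμ + ∫ g dν` among pairs `(f, g)` of continuous functions with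
`u(x,y) ≤ f(x) + g(y)`. On a compact space, for probability measures, it is finite and sublinear
in `u`. -/
def covVal {X : Type*} [TopologicalSpace X] [MeasurableSpace X]
    (μ ν : Measure X) (u : C(X × X, ℝ)) : ℝ :=
  sInf {r | ∃ f g : C(X, ℝ), (∀ x y, u (x, y) ≤ f x + g y) ∧ r = ∫ x, f x ∂μ + ∫ x, g x ∂ν}

section Kant
variable {X : Type*} [MetricSpace X] [CompactSpace X] [MeasurableSpace X] [BorelSpace X]
  (μ ν : Measure X) [IsProbabilityMeasure μ] [IsProbabilityMeasure ν]

theorem integrable_cont {Y : Type*} [TopologicalSpace Y] [CompactSpace Y] [MeasurableSpace Y]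
    [OpensMeasurableSpace Y] (γ : Measure Y) [IsFiniteMeasure γ] (f : C(Y, ℝ)) :
    Integrable (fun x => f x) γ :=
  f.continuous.integrable_of_hasCompactSupport (HasCompactSupport.of_compactSpace _)

/-- Integrating `u ≤ f ⊕ g` against the product plan bounds the infimum in `covVal` from below. -/
theorem covVal_bdd (u : C(X × X, ℝ)) {f g : C(X, ℝ)} (h : ∀ x y, u (x, y) ≤ f x + g y) :
    ∫ p, u p ∂(μ.prod ν) ≤ ∫ x, f x ∂μ + ∫ x, g x ∂ν := by
  have h1 : Integrable (fun p : X × X => f p.1) (μ.prod ν) :=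
    integrable_cont _ (f.comp ⟨Prod.fst, continuous_fst⟩)
  have h2 : Integrable (fun p : X × X => g p.2) (μ.prod ν) :=
    integrable_cont _ (g.comp ⟨Prod.snd, continuous_snd⟩)
  have e : ∫ p : X × X, (f p.1 + g p.2) ∂(μ.prod ν) = ∫ x, f x ∂μ + ∫ x, g x ∂ν := by
    rw [integral_add h1 h2, integral_fun_fst (μ := μ) (ν := ν) (fun x => f x),
      integral_fun_snd (μ := μ) (ν := ν) (fun x => g x)]
    simp
  rw [← e]
  exact integral_mono (integrable_cont _ u) (h1.add h2) fun p => h p.1 p.2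

theorem covVal_le (u : C(X × X, ℝ)) (f g : C(X, ℝ)) (h : ∀ x y, u (x, y) ≤ f x + g y) :
    covVal μ ν u ≤ ∫ x, f x ∂μ + ∫ x, g x ∂ν := by
  refine csInf_le ⟨∫ p, u p ∂(μ.prod ν), ?_⟩ ⟨f, g, h, rfl⟩
  rintro r ⟨f, g, h, rfl⟩
  exact covVal_bdd μ ν u h

set_option linter.unusedSectionVars false in
theorem exists_covVal (u : C(X × X, ℝ)) {ε : ℝ} (hε : 0 < ε) :
    ∃ f g : C(X, ℝ), (∀ x y, u (x, y) ≤ f x + g y) ∧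
      ∫ x, f x ∂μ + ∫ x, g x ∂ν < covVal μ ν u + ε := by
  have hne : {r | ∃ f g : C(X, ℝ), (∀ x y, u (x, y) ≤ f x + g y) ∧
      r = ∫ x, f x ∂μ + ∫ x, g x ∂ν}.Nonempty := by
    refine ⟨_, ContinuousMap.const X ‖u‖, 0, fun x y => ?_, rfl⟩
    simpa using (le_abs_self _).trans (u.norm_coe_le_norm (x, y))
  obtain ⟨r, ⟨f, g, h, rfl⟩, hr⟩ := exists_lt_of_csInf_lt hne
    (show sInf _ < covVal μ ν u + ε from lt_add_of_pos_right _ hε)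
  exact ⟨f, g, h, hr⟩

theorem covVal_smul_le (u : C(X × X, ℝ)) {c : ℝ} (hc : 0 < c) :
    covVal μ ν (c • u) ≤ c * covVal μ ν u := by
  refine le_of_forall_pos_le_add fun ε hε => ?_
  obtain ⟨f, g, h, hlt⟩ := exists_covVal μ ν u (div_pos hε hc)
  refine (covVal_le μ ν (c • u) (c • f) (c • g) fun x y => ?_).trans ?_
  · have := mul_le_mul_of_nonneg_left (h x y) hc.le
    simpa [mul_add] using this
  · simp only [ContinuousMap.smul_apply, smul_eq_mul, integral_const_mul]
    have := mul_lt_mul_of_pos_left hlt hc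
    rw [mul_add, mul_add, mul_div_cancel₀ _ hc.ne'] at this
    exact this.le

theorem covVal_smul (c : ℝ) (hc : 0 < c) (u : C(X × X, ℝ)) :
    covVal μ ν (c • u) = c * covVal μ ν u := by
  refine le_antisymm (covVal_smul_le μ ν u hc) ?_
  have := covVal_smul_le μ ν (c • u) (inv_pos.2 hc)
  rw [inv_smul_smul₀ hc.ne'] at this
  have h2 := mul_le_mul_of_nonneg_left this hc.le
  rwa [mul_inv_cancel_left₀ hc.ne'] at h2

theorem covVal_add (u v : C(X × X, ℝ)) :
    covVal μ ν (u + v) ≤ covVal μ ν u + covVal μ ν v := by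
  refine le_of_forall_pos_le_add fun ε hε => ?_
  obtain ⟨f, g, h, hlt⟩ := exists_covVal μ ν u (half_pos hε)
  obtain ⟨f', g', h', hlt'⟩ := exists_covVal μ ν v (half_pos hε)
  refine (covVal_le μ ν (u + v) (f + f') (g + g') fun x y => ?_).trans ?_
  · have := h x y
    have := h' x y
    simp only [ContinuousMap.add_apply]
    linarith
  · simp only [ContinuousMap.add_apply]
    rw [integral_add (integrable_cont _ f) (integrable_cont _ f'),
      integral_add (integrable_cont _ g) (integrable_cont _ g')]
    linarith

theorem covVal_zero : covVal μ ν (0 : C(X × X, ℝ)) = 0 := by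
  have := covVal_smul μ ν 2 (by norm_num) 0
  rw [smul_zero] at this
  linarith

open scoped CompactlySupported in
/-- Strong Kantorovich duality on a compact metric space. By Hahn–Banach, the functional
`t • (-c) ↦ t * covVal (-c)` extends to a linear functional dominated by `covVal`. Domination makes
it positive and fixes its values on functions `f ⊕ g`, so the Riesz–Markov–Kakutani measure
representing it is a coupling of `μ` and `ν`; its cost is `-covVal (-c)`, the dual supremum. -/
theorem exists_plan_dual (c : C(X × X, ℝ)) :
    ∃ γ : Measure (X × X), γ.map Prod.fst = μ ∧ γ.map Prod.snd = ν ∧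
      ∀ ε > 0, ∃ f g : C(X, ℝ), (∀ x y, f x + g y ≤ c (x, y)) ∧
        ∫ p, c p ∂γ ≤ ∫ x, f x ∂μ + ∫ x, g x ∂ν + ε := by
  set p := covVal μ ν with hp
  let L : C(X × X, ℝ) →ₗ.[ℝ] ℝ := LinearPMap.mkSpanSingleton' (-c) (p (-c)) (by
    intro t ht
    rcases smul_eq_zero.1 ht with h | h
    · simp [h]
    · rw [h, hp, covVal_zero, smul_zero])
  obtain ⟨Λ, hΛ, hle⟩ := exists_extension_of_le_sublinear L p (covVal_smul μ ν) (covVal_add μ ν) (by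
    rintro ⟨x, hx⟩
    obtain ⟨t, rfl⟩ := Submodule.mem_span_singleton.1 hx
    rw [LinearPMap.mkSpanSingleton'_apply]
    simp only [smul_eq_mul, RingHom.id_apply]
    rcases lt_trichotomy t 0 with h | h | h
    · have h1 := covVal_add μ ν (t • (-c)) ((-t) • (-c))
      rw [← add_smul, add_neg_cancel, zero_smul, covVal_zero,
        covVal_smul μ ν (-t) (by linarith)] at h1
      simp only [hp]
      linarith
    · simp [h, hp, covVal_zero]
    · rw [hp, covVal_smul μ ν t h])
  have hΛc : Λ (-c) = p (-c) := by
    have := hΛ ⟨-c, Submodule.mem_span_singleton_self _⟩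
    rw [this]
    exact LinearPMap.mkSpanSingleton'_apply_self _ _ _ _
  let Λ' : C_c(X × X, ℝ) →ₗ[ℝ] ℝ :=
    { toFun := fun f => Λ f.toContinuousMap
      map_add' := fun f g => Λ.map_add f.toContinuousMap g.toContinuousMap
      map_smul' := fun t f => Λ.map_smul t f.toContinuousMap }
  let P : C_c(X × X, ℝ) →ₚ[ℝ] ℝ := PositiveLinearMap.mk₀ Λ' (by
    intro f hf
    have h1 : Λ (-f.toContinuousMap) ≤ 0 := by
      refine (hle _).trans ((covVal_le μ ν _ 0 0 fun x y => ?_).trans (by simp))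
      have : 0 ≤ f (x, y) := hf (x, y)
      simpa using this
    rw [map_neg] at h1
    show 0 ≤ Λ f.toContinuousMap
    linarith)
  let γ := RealRMK.rieszMeasure P
  have hγ : ∀ f : C(X × X, ℝ), ∫ q, f q ∂γ = Λ f := fun f =>
    RealRMK.integral_rieszMeasure P (CompactlySupportedContinuousMap.continuousMapEquiv f)
  have hsum : ∀ f g : C(X, ℝ), Λ (f.comp ⟨Prod.fst, continuous_fst⟩ +
      g.comp ⟨Prod.snd, continuous_snd⟩) = ∫ x, f x ∂μ + ∫ x, g x ∂ν := by
    intro f g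
    refine le_antisymm ((hle _).trans (covVal_le μ ν _ f g fun x y => by simp)) ?_
    have := (hle (-(f.comp ⟨Prod.fst, continuous_fst⟩ +
      g.comp ⟨Prod.snd, continuous_snd⟩))).trans
      (covVal_le μ ν _ (-f) (-g) fun x y => by simp [add_comm])
    rw [map_neg] at this
    simp only [ContinuousMap.neg_apply, integral_neg] at this
    linarith
  refine ⟨γ, ?_, ?_, fun ε hε => ?_⟩
  · refine ext_of_forall_integral_eq_of_IsFiniteMeasure fun f => ?_
    rw [integral_map measurable_fst.aemeasurable f.continuous.aestronglyMeasurable]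
    have h1 := hsum f.toContinuousMap 0
    rw [← hγ] at h1
    simpa using h1
  · refine ext_of_forall_integral_eq_of_IsFiniteMeasure fun f => ?_
    rw [integral_map measurable_snd.aemeasurable f.continuous.aestronglyMeasurable]
    have h1 := hsum 0 f.toContinuousMap
    rw [← hγ] at h1
    simpa using h1
  · obtain ⟨f, g, h, hlt⟩ := exists_covVal μ ν (-c) hε
    refine ⟨-f, -g, fun x y => ?_, ?_⟩
    · have := h x y
      simp only [ContinuousMap.neg_apply] at *
      linarith
    · rw [hγ c]
      rw [map_neg] at hΛc
      simp only [ContinuousMap.neg_apply, integral_neg]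
      linarith
end Kant

/-! ### Couplings and optimal plans on `Ω` -/

theorem integrable_of_compact {Y : Type*} [TopologicalSpace Y] [T2Space Y] [MeasurableSpace Y]
    [BorelSpace Y] {K : Set Y} (hK : IsCompact K) (γ : Measure Y) [IsFiniteMeasure γ]
    (h0 : γ Kᶜ = 0) {f : Y → ℝ} (hf : ContinuousOn f K) : Integrable f γ := by
  have h1 : IntegrableOn f K γ := hf.integrableOn_of_subset_isCompact hK hK.measurableSet
    subset_rfl (measure_ne_top _ _)
  have h2 : γ.restrict K = γ := Measure.restrict_eq_self_of_ae_mem (by rwa [ae_iff])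
  rwa [IntegrableOn, h2] at h1

theorem ProbOn.ae_mem {Ω : Set (Ed d)} {μ : Measure (Ed d)} (hμ : ProbOn Ω μ) : ∀ᵐ x ∂μ, x ∈ Ω := by
  rw [ae_iff]
  exact hμ.2

theorem ProbOn.integrable {Ω : Set (Ed d)} (hΩ : IsCompact Ω) {μ : Measure (Ed d)}
    (hμ : ProbOn Ω μ) {f : Ed d → ℝ} (hf : ContinuousOn f Ω) : Integrable f μ :=
  have := hμ.1
  integrable_of_compact hΩ μ hμ.2 hf

namespace IsCoupling

variable {Ω : Set (Ed d)} {μ ν : Measure (Ed d)} {γ : Measure (Ed d × Ed d)}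

theorem prob (h : IsCoupling μ ν γ) (hμ : ProbOn Ω μ) : IsProbabilityMeasure γ := by
  have := hμ.1
  rw [← h.1] at this
  exact Measure.isProbabilityMeasure_of_map Prod.fst

theorem ae_mem (h : IsCoupling μ ν γ) (hμ : ProbOn Ω μ) (hν : ProbOn Ω ν) :
    ∀ᵐ p ∂γ, p.1 ∈ Ω ∧ p.2 ∈ Ω := by
  have h1 := hμ.ae_mem
  have h2 := hν.ae_mem
  rw [← h.1] at h1
  rw [← h.2] at h2
  filter_upwards [ae_of_ae_map measurable_fst.aemeasurable h1,
    ae_of_ae_map measurable_snd.aemeasurable h2] with p a b using ⟨a, b⟩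

theorem integrable (h : IsCoupling μ ν γ) (hΩ : IsCompact Ω) (hμ : ProbOn Ω μ) (hν : ProbOn Ω ν)
    {c : Ed d → Ed d → ℝ} (hc : Continuous fun p : Ed d × Ed d => c p.1 p.2) :
    Integrable (fun p => c p.1 p.2) γ := by
  have := h.prob hμ
  refine integrable_of_compact (hΩ.prod hΩ) γ ?_ hc.continuousOn
  exact ae_iff.1 (h.ae_mem hμ hν)

theorem integrable_fst (h : IsCoupling μ ν γ) (hΩ : IsCompact Ω) (hμ : ProbOn Ω μ)
    {f : Ed d → ℝ} (hf : ContinuousOn f Ω) : Integrable (fun p => f p.1) γ := by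
  have := hμ.integrable hΩ hf
  rw [← h.1] at this
  exact this.comp_measurable measurable_fst

theorem integrable_snd (h : IsCoupling μ ν γ) (hΩ : IsCompact Ω) (hν : ProbOn Ω ν)
    {f : Ed d → ℝ} (hf : ContinuousOn f Ω) : Integrable (fun p => f p.2) γ := by
  have := hν.integrable hΩ hf
  rw [← h.2] at this
  exact this.comp_measurable measurable_snd

theorem integral_add_eq (h : IsCoupling μ ν γ) (hΩ : IsCompact Ω) (hμ : ProbOn Ω μ)
    (hν : ProbOn Ω ν) {f g : Ed d → ℝ} (hf : ContinuousOn f Ω) (hg : ContinuousOn g Ω) :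
    ∫ p, (f p.1 + g p.2) ∂γ = ∫ x, f x ∂μ + ∫ x, g x ∂ν := by
  rw [integral_add (h.integrable_fst hΩ hμ hf) (h.integrable_snd hΩ hν hg)]
  have h1 := (hμ.integrable hΩ hf).aestronglyMeasurable
  have h2 := (hν.integrable hΩ hg).aestronglyMeasurable
  congr 1
  · rw [← h.1] at h1 ⊢
    rw [integral_map measurable_fst.aemeasurable h1]
  · rw [← h.2] at h2 ⊢
    rw [integral_map measurable_snd.aemeasurable h2]

/-- Weak duality for a single plan. -/
theorem le_integral (h : IsCoupling μ ν γ) (hΩ : IsCompact Ω) (hμ : ProbOn Ω μ)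
    (hν : ProbOn Ω ν) {f g : Ed d → ℝ} (hf : ContinuousOn f Ω) (hg : ContinuousOn g Ω)
    {c : Ed d → Ed d → ℝ} (hc : Continuous fun p : Ed d × Ed d => c p.1 p.2)
    (hle : ∀ x ∈ Ω, ∀ y ∈ Ω, f x + g y ≤ c x y) :
    ∫ x, f x ∂μ + ∫ x, g x ∂ν ≤ ∫ p, c p.1 p.2 ∂γ := by
  rw [← h.integral_add_eq hΩ hμ hν hf hg]
  refine integral_mono_ae ((h.integrable_fst hΩ hμ hf).add (h.integrable_snd hΩ hν hg))
    (h.integrable hΩ hμ hν hc) ?_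
  filter_upwards [h.ae_mem hμ hν] with p hp using hle _ hp.1 _ hp.2

/-- Complementary slackness: a plan whose cost is at most the value of an admissible dual pair is
concentrated on the contact set of that pair. -/
theorem ae_eq_of_integral_eq (h : IsCoupling μ ν γ) (hΩ : IsCompact Ω) (hμ : ProbOn Ω μ)
    (hν : ProbOn Ω ν) {f g : Ed d → ℝ} (hf : ContinuousOn f Ω) (hg : ContinuousOn g Ω)
    {c : Ed d → Ed d → ℝ} (hc : Continuous fun p : Ed d × Ed d => c p.1 p.2)
    (hle : ∀ x ∈ Ω, ∀ y ∈ Ω, f x + g y ≤ c x y)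
    (he : ∫ p, c p.1 p.2 ∂γ ≤ ∫ x, f x ∂μ + ∫ x, g x ∂ν) :
    ∀ᵐ p ∂γ, f p.1 + g p.2 = c p.1 p.2 := by
  have i1 := (h.integrable_fst hΩ hμ hf).add (h.integrable_snd hΩ hν hg)
  have i2 := h.integrable hΩ hμ hν hc
  have h0 : ∀ᵐ p ∂γ, f p.1 + g p.2 ≤ c p.1 p.2 := by
    filter_upwards [h.ae_mem hμ hν] with p hp using hle _ hp.1 _ hp.2
  rw [← h.integral_add_eq hΩ hμ hν hf hg] at he
  exact (integral_eq_iff_of_ae_le i1 i2 h0).1 (le_antisymm (integral_mono_ae i1 i2 h0) he)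

theorem swap (h : IsCoupling μ ν γ) : IsCoupling ν μ (γ.map Prod.swap) := by
  refine ⟨?_, ?_⟩
  · rw [Measure.map_map measurable_fst measurable_swap]
    exact h.2
  · rw [Measure.map_map measurable_snd measurable_swap]
    exact h.1

end IsCoupling

/-- Kantorovich duality on `Ω`: there is a plan whose cost is approximated from below by the
values of admissible dual pairs. -/
theorem exists_coupling_dual {Ω : Set (Ed d)} (hΩ : IsCompact Ω) {μ ν : Measure (Ed d)}
    (hμ : ProbOn Ω μ) (hν : ProbOn Ω ν) {c : Ed d → Ed d → ℝ}
    (hc : Continuous fun p : Ed d × Ed d => c p.1 p.2) :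
    ∃ γ, IsCoupling μ ν γ ∧ ∀ ε > 0, ∃ f g : Ed d → ℝ, ContinuousOn f Ω ∧ ContinuousOn g Ω ∧
      (∀ x ∈ Ω, ∀ y ∈ Ω, f x + g y ≤ c x y) ∧
      ∫ p, c p.1 p.2 ∂γ ≤ ∫ x, f x ∂μ + ∫ x, g x ∂ν + ε := by
  have : CompactSpace Ω := isCompact_iff_compactSpace.1 hΩ
  have hme : MeasurableEmbedding (Subtype.val : Ω → Ed d) :=
    MeasurableEmbedding.subtype_coe hΩ.measurableSet
  have key : ∀ {m : Measure (Ed d)}, ProbOn Ω m →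
      (m.comap (Subtype.val : Ω → Ed d)).map Subtype.val = m := by
    intro m hm
    rw [map_comap_subtype_coe hΩ.measurableSet]
    exact Measure.restrict_eq_self_of_ae_mem hm.ae_mem
  have keyP : ∀ {m : Measure (Ed d)}, ProbOn Ω m →
      IsProbabilityMeasure (m.comap (Subtype.val : Ω → Ed d)) := by
    intro m hm
    have h1 := hm.1
    rw [← key hm] at h1
    exact Measure.isProbabilityMeasure_of_map (Subtype.val : Ω → Ed d)
  have := keyP hμ
  have := keyP hν
  let C : C(Ω × Ω, ℝ) := ⟨fun p => c p.1 p.2,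
    hc.comp ((continuous_subtype_val.comp continuous_fst).prodMk
      (continuous_subtype_val.comp continuous_snd))⟩
  obtain ⟨γ, h1, h2, h3⟩ := exists_plan_dual (μ.comap (Subtype.val : Ω → Ed d))
    (ν.comap (Subtype.val : Ω → Ed d)) C
  have hι : Measurable (Prod.map (Subtype.val : Ω → Ed d) (Subtype.val : Ω → Ed d)) :=
    measurable_subtype_coe.prodMap measurable_subtype_coe
  let ext : C(Ω, ℝ) → Ed d → ℝ := fun f => Function.extend Subtype.val f 0
  have hext : ∀ (f : C(Ω, ℝ)) (x : Ω), ext f x = f x := fun f x =>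
    Subtype.val_injective.extend_apply _ _ _
  have hextc : ∀ f : C(Ω, ℝ), ContinuousOn (ext f) Ω := by
    intro f
    rw [continuousOn_iff_continuous_domRestrict]
    refine f.continuous.congr fun x => (hext f x).symm
  have hexti : ∀ {m : Measure (Ed d)} (hm : ProbOn Ω m) (f : C(Ω, ℝ)),
      ∫ x, ext f x ∂m = ∫ x, f x ∂(m.comap (Subtype.val : Ω → Ed d)) := by
    intro m hm f
    conv_lhs => rw [← key hm]
    rw [hme.integral_map]
    simp only [hext]
  refine ⟨γ.map (Prod.map Subtype.val Subtype.val), ⟨?_, ?_⟩, fun ε hε => ?_⟩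
  · rw [Measure.map_map measurable_fst hι]
    conv_rhs => rw [← key hμ, ← h1]
    rw [Measure.map_map measurable_subtype_coe measurable_fst]
    rfl
  · rw [Measure.map_map measurable_snd hι]
    conv_rhs => rw [← key hν, ← h2]
    rw [Measure.map_map measurable_subtype_coe measurable_snd]
    rfl
  · obtain ⟨f, g, hfg, hle⟩ := h3 ε hε
    refine ⟨ext f, ext g, hextc f, hextc g, fun x hx y hy => ?_, ?_⟩
    · have := hfg ⟨x, hx⟩ ⟨y, hy⟩
      rw [← hext, ← hext] at this
      exact this
    · rw [hexti hμ, hexti hν, integral_map hι.aemeasurable hc.aestronglyMeasurable]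
      exact hle

/-- Optimal plans exist and attain `tCost`; optimality follows by comparing any other plan with
the approximating dual pairs. -/
theorem exists_optimalPlan {Ω : Set (Ed d)} (hΩ : IsCompact Ω) {μ ν : Measure (Ed d)}
    (hμ : ProbOn Ω μ) (hν : ProbOn Ω ν) {c : Ed d → Ed d → ℝ}
    (hc : Continuous fun p : Ed d × Ed d => c p.1 p.2) :
    ∃ γ, IsOptimalPlan c μ ν γ ∧ tCost c μ ν = ∫ p, c p.1 p.2 ∂γ := by
  obtain ⟨γ, hγ, h⟩ := exists_coupling_dual hΩ hμ hν hc
  have hopt : ∀ γ', IsCoupling μ ν γ' → ∫ p, c p.1 p.2 ∂γ ≤ ∫ p, c p.1 p.2 ∂γ' := by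
    intro γ' hγ'
    refine le_of_forall_pos_le_add fun ε hε => ?_
    obtain ⟨f, g, hf, hg, hfg, hle⟩ := h ε hε
    have := hγ'.le_integral hΩ hμ hν hf hg hc hfg
    linarith
  refine ⟨γ, ⟨hγ, hopt⟩, IsLeast.csInf_eq ⟨⟨γ, hγ, rfl⟩, ?_⟩⟩
  rintro r ⟨γ', h', rfl⟩
  exact hopt γ' h'

theorem tCost_le {Ω : Set (Ed d)} (hΩ : IsCompact Ω) {μ ν : Measure (Ed d)}
    (hμ : ProbOn Ω μ) (hν : ProbOn Ω ν) {c : Ed d → Ed d → ℝ}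
    (hc : Continuous fun p : Ed d × Ed d => c p.1 p.2) {γ : Measure (Ed d × Ed d)}
    (hγ : IsCoupling μ ν γ) : tCost c μ ν ≤ ∫ p, c p.1 p.2 ∂γ := by
  obtain ⟨γ₀, h, e⟩ := exists_optimalPlan hΩ hμ hν hc
  rw [e]
  exact h.2 γ hγ

theorem le_tCost {Ω : Set (Ed d)} (hΩ : IsCompact Ω) {μ ν : Measure (Ed d)}
    (hμ : ProbOn Ω μ) (hν : ProbOn Ω ν) {c : Ed d → Ed d → ℝ}
    (hc : Continuous fun p : Ed d × Ed d => c p.1 p.2) {f g : Ed d → ℝ}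
    (hf : ContinuousOn f Ω) (hg : ContinuousOn g Ω)
    (hle : ∀ x ∈ Ω, ∀ y ∈ Ω, f x + g y ≤ c x y) :
    ∫ x, f x ∂μ + ∫ x, g x ∂ν ≤ tCost c μ ν := by
  obtain ⟨γ₀, h, e⟩ := exists_optimalPlan hΩ hμ hν hc
  rw [e]
  exact h.1.le_integral hΩ hμ hν hf hg hc hle

theorem continuous_c2 : Continuous fun p : Ed d × Ed d => c2 p.1 p.2 := by
  unfold c2
  fun_prop

open scoped Pointwise in
theorem W2sq_half (μ ν : Measure (Ed d)) : W2sq μ ν / 2 = tCost c2 μ ν := by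
  have hS : {r | ∃ γ : Measure (Ed d × Ed d), IsCoupling μ ν γ ∧ r = ∫ p, c2 p.1 p.2 ∂γ} =
      (2 : ℝ)⁻¹ • {r | ∃ γ : Measure (Ed d × Ed d), IsCoupling μ ν γ ∧
        r = ∫ p, ‖p.1 - p.2‖ ^ 2 ∂γ} := by
    ext r
    simp only [Set.mem_smul_set, Set.mem_ofPred_eq, c2, integral_div, smul_eq_mul]
    constructor
    · rintro ⟨γ, h, rfl⟩
      exact ⟨_, ⟨γ, h, rfl⟩, by ring⟩
    · rintro ⟨_, ⟨γ, h, rfl⟩, rfl⟩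
      exact ⟨γ, h, by ring⟩
  rw [W2sq, tCost, tCost, hS, Real.sInf_smul_of_nonneg (by norm_num), smul_eq_mul]
  ring

theorem W2sq_comm (μ ν : Measure (Ed d)) : W2sq μ ν = W2sq ν μ := by
  have key : ∀ μ ν : Measure (Ed d),
      {r | ∃ γ : Measure (Ed d × Ed d), IsCoupling μ ν γ ∧ r = ∫ p, ‖p.1 - p.2‖ ^ 2 ∂γ} ⊆
      {r | ∃ γ : Measure (Ed d × Ed d), IsCoupling ν μ γ ∧ r = ∫ p, ‖p.1 - p.2‖ ^ 2 ∂γ} := by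
    rintro μ ν r ⟨γ, h, rfl⟩
    refine ⟨_, h.swap, ?_⟩
    rw [integral_map measurable_swap.aemeasurable (by fun_prop)]
    simp only [Prod.fst_swap, Prod.snd_swap, norm_sub_rev]
  unfold W2sq tCost
  rw [Set.Subset.antisymm (key μ ν) (key ν μ)]

/-! ### The `c`-transform -/

theorem ProbOn.nonempty {Ω : Set (Ed d)} {μ : Measure (Ed d)} (hμ : ProbOn Ω μ) : Ω.Nonempty := by
  have := hμ.1
  exact hμ.ae_mem.exists

section CTransform

variable {Ω : Set (Ed d)} {c : Ed d → Ed d → ℝ} {φ ψ : Ed d → ℝ}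

theorem exists_ctrans_eq (hΩ : IsCompact Ω) (hne : Ω.Nonempty)
    (hc : Continuous fun p : Ed d × Ed d => c p.1 p.2) (hφ : ContinuousOn φ Ω) (x : Ed d) :
    ∃ y ∈ Ω, ctrans c Ω φ x = c x y - φ y ∧ ∀ z ∈ Ω, c x y - φ y ≤ c x z - φ z := by
  have h1 : Continuous (c x) := hc.comp (Continuous.prodMk_right x)
  obtain ⟨y, hy, hmin⟩ := hΩ.exists_isMinOn hne (h1.continuousOn.sub hφ)
  refine ⟨y, hy, IsLeast.csInf_eq ⟨⟨y, hy, rfl⟩, ?_⟩, hmin⟩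
  rintro _ ⟨z, hz, rfl⟩
  exact hmin hz

theorem ctrans_le (hΩ : IsCompact Ω)
    (hc : Continuous fun p : Ed d × Ed d => c p.1 p.2) (hφ : ContinuousOn φ Ω) (x : Ed d)
    {z : Ed d} (hz : z ∈ Ω) : ctrans c Ω φ x ≤ c x z - φ z := by
  obtain ⟨y, _, e, h⟩ := exists_ctrans_eq hΩ ⟨z, hz⟩ hc hφ x
  rw [e]
  exact h z hz

theorem ctrans_anti (hΩ : IsCompact Ω) (hne : Ω.Nonempty)
    (hc : Continuous fun p : Ed d × Ed d => c p.1 p.2) (hφ : ContinuousOn φ Ω)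
    (hψ : ContinuousOn ψ Ω) {k : ℝ} (h : ∀ y ∈ Ω, φ y ≤ ψ y + k) (x : Ed d) :
    ctrans c Ω ψ x ≤ ctrans c Ω φ x + k := by
  obtain ⟨y, hy, e, -⟩ := exists_ctrans_eq hΩ hne hc hφ x
  have := ctrans_le hΩ hc hψ x hy
  have := h y hy
  linarith

theorem lipschitzOn_ctrans (hΩ : IsCompact Ω) (hne : Ω.Nonempty)
    (hc : Continuous fun p : Ed d × Ed d => c p.1 p.2) (hφ : ContinuousOn φ Ω) {S : Set (Ed d)}
    {K : NNReal} (h : ∀ y ∈ Ω, ∀ x ∈ S, ∀ x' ∈ S, c x y ≤ c x' y + K * dist x x') :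
    LipschitzOnWith K (ctrans c Ω φ) S := by
  refine LipschitzOnWith.of_le_add_mul K fun x hx x' hx' => ?_
  obtain ⟨y, hy, e, -⟩ := exists_ctrans_eq hΩ hne hc hφ x'
  have := ctrans_le hΩ hc hφ x hy
  have := h y hy x hx x' hx'
  linarith

theorem c2_sub_le {R : ℝ} {x x' y : Ed d} (hx : ‖x‖ ≤ R) (hx' : ‖x'‖ ≤ R) (hy : ‖y‖ ≤ R) :
    c2 x y ≤ c2 x' y + 2 * R * dist x x' := by
  unfold c2
  have h1 : ‖x - y‖ ≤ 2 * R := (norm_sub_le _ _).trans (by linarith)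
  have h2 : ‖x' - y‖ ≤ 2 * R := (norm_sub_le _ _).trans (by linarith)
  have h3 : ‖x - y‖ ≤ ‖x' - y‖ + dist x x' := by
    rw [dist_eq_norm]
    calc ‖x - y‖ = ‖(x' - y) + (x - x')‖ := by congr 1; abel
      _ ≤ _ := norm_add_le _ _
  nlinarith [norm_nonneg (x - y), norm_nonneg (x' - y), dist_nonneg (x := x) (y := x')]

theorem lipschitzOn_ctrans_c2 (hΩ : IsCompact Ω) (hne : Ω.Nonempty) (hφ : ContinuousOn φ Ω)
    {R : NNReal} (hR : Ω ⊆ Metric.ball 0 R) :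
    LipschitzOnWith (2 * R) (ctrans c2 Ω φ) (Metric.ball 0 R) := by
  refine lipschitzOn_ctrans hΩ hne continuous_c2 hφ fun y hy x hx x' hx' => ?_
  have h1 : ∀ {z : Ed d}, z ∈ Metric.ball (0 : Ed d) R → ‖z‖ ≤ R := fun hz =>
    (mem_ball_zero_iff.1 hz).le
  exact_mod_cast c2_sub_le (h1 hx) (h1 hx') (h1 (hR hy))

theorem exists_ball (hΩ : IsCompact Ω) : ∃ R : NNReal, Ω ⊆ Metric.ball 0 R := by
  obtain ⟨r, hr⟩ := hΩ.isBounded.subset_ball (0 : Ed d)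
  exact ⟨r.toNNReal, hr.trans (Metric.ball_subset_ball (Real.le_coe_toNNReal r))⟩

theorem continuousOn_ctrans_c2 (hΩ : IsCompact Ω) (hne : Ω.Nonempty) (hφ : ContinuousOn φ Ω) :
    ContinuousOn (ctrans c2 Ω φ) Ω := by
  obtain ⟨R, hR⟩ := exists_ball hΩ
  exact (lipschitzOn_ctrans_c2 hΩ hne hφ hR).continuousOn.mono hR

/-- Rademacher's theorem for the locally Lipschitz function `φ^{c₂}`. -/
theorem ae_differentiableAt_ctrans (hΩ : IsCompact Ω) (hne : Ω.Nonempty)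
    (hφ : ContinuousOn φ Ω) {μ : Measure (Ed d)} (hμ : ProbOn Ω μ)
    (hac : μ ≪ (volume : Measure (Ed d))) :
    ∀ᵐ x ∂μ, DifferentiableAt ℝ (ctrans c2 Ω φ) x := by
  obtain ⟨R, hR⟩ := exists_ball hΩ
  have h1 := hac.ae_le ((lipschitzOn_ctrans_c2 hΩ hne hφ hR).ae_differentiableWithinAt_of_mem
    (μ := volume))
  filter_upwards [h1, hμ.ae_mem] with x hx hxΩ
  exact (hx (hR hxΩ)).differentiableAt (Metric.isOpen_ball.mem_nhds (hR hxΩ))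

/-- First-order condition: if `y` attains `φ^{c₂}(x)`, then `z ↦ c₂(z,y) - φ^{c₂}(z)` is minimal
at `x`, so its gradient `x - y - ∇φ^{c₂}(x)` vanishes. -/
theorem eq_sub_gradient (hΩ : IsCompact Ω) (hφ : ContinuousOn φ Ω) {x y : Ed d} (hy : y ∈ Ω)
    (hd : DifferentiableAt ℝ (ctrans c2 Ω φ) x) (h : ctrans c2 Ω φ x = c2 x y - φ y) :
    y = x - gradient (ctrans c2 Ω φ) x := by
  have h2 : HasGradientAt (fun z => c2 z y) (x - y) x := by
    have h3 : HasFDerivAt (fun z : Ed d => ‖z - y‖ ^ 2) (2 • (innerSL ℝ (x - y)).comp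
        (ContinuousLinearMap.id ℝ (Ed d))) x := ((hasFDerivAt_id x).sub_const y).norm_sq
    have h4 := h3.const_mul (2⁻¹ : ℝ)
    rw [hasGradientAt_iff_hasFDerivAt]
    refine (h4.congr_of_eventuallyEq (Eventually.of_forall fun z => ?_)).congr_fderiv ?_
    · simp only [c2]
      ring
    · ext v
      simp
  have hmin : IsLocalMin (fun z => c2 z y - ctrans c2 Ω φ z) x := by
    refine Eventually.of_forall fun z => ?_
    have := ctrans_le hΩ continuous_c2 hφ z hy
    simp only
    linarith
  have h5 := hmin.hasFDerivAt_eq_zero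
    ((hasGradientAt_iff_hasFDerivAt.1 h2).sub (hasGradientAt_iff_hasFDerivAt.1 hd.hasGradientAt))
  rw [← map_sub, EmbeddingLike.map_eq_zero_iff] at h5
  rw [sub_eq_zero] at h5
  rw [← h5]
  abel

/-- A minimiser of `c₂(x,·) - φ` lies within distance `λ` of `x` if `φ` is `λ`-Lipschitz: otherwise
moving it towards `x` decreases the cost. -/
theorem norm_sub_le_of_min (hconv : Convex ℝ Ω) {lam : ℝ} (hlam : 0 < lam)
    (hφ : LipschitzOnWith (Real.toNNReal lam) φ Ω) {x y : Ed d} (hx : x ∈ Ω) (hy : y ∈ Ω)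
    (hmin : ∀ z ∈ Ω, c2 x y - φ y ≤ c2 x z - φ z) : ‖x - y‖ ≤ lam := by
  by_contra! hlt
  set r := ‖x - y‖ with hr
  have hr0 : 0 < r := hlam.trans hlt
  -- `z = y + t (x - y)` is the point of `[x, y]` at distance exactly `λ` from `x`
  set t : ℝ := 1 - lam / r with ht
  have htr : t * r = r - lam := by
    rw [ht]
    field_simp
  have ht0 : 0 < t := by
    rw [ht, sub_pos, div_lt_one hr0]
    exact hlt
  have ht1 : t ≤ 1 := by
    rw [ht]
    have : 0 < lam / r := div_pos hlam hr0
    linarith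
  set z := y + t • (x - y) with hz
  have hzΩ : z ∈ Ω := hconv.add_smul_sub_mem hy hx ⟨ht0.le, ht1⟩
  have h1 := hmin z hzΩ
  have h2 : ‖x - z‖ = (1 - t) * r := by
    rw [show x - z = (1 - t) • (x - y) by rw [hz]; module, norm_smul, Real.norm_eq_abs,
      abs_of_nonneg (by linarith)]
  have h3 : ‖y - z‖ = t * r := by
    rw [show y - z = (-t) • (x - y) by rw [hz]; module, norm_smul, Real.norm_eq_abs, abs_neg,
      abs_of_pos ht0]
  have h4 := hφ.dist_le_mul y hy z hzΩ
  rw [dist_eq_norm y z, Real.dist_eq, h3, Real.coe_toNNReal _ hlam.le] at h4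
  have h6 : (1 - t) * r = lam := by linarith
  simp only [c2] at h1
  rw [h2, ← hr, h6] at h1
  have h8 := (abs_le.1 h4).2
  rw [htr] at h8
  nlinarith

end CTransform

/-! ### The Huber cost and the dual problem -/

section Huber

variable {Ω : Set (Ed d)} {μ ν : Measure (Ed d)} {φ : Ed d → ℝ} {lam : ℝ}

theorem huber_eq (lam : ℝ) (x y : Ed d) :
    huber lam x y = min ‖x - y‖ lam * ‖x - y‖ - min ‖x - y‖ lam ^ 2 / 2 := by
  unfold huber
  split_ifs with h
  · rw [min_eq_left h]
    ring
  · rw [min_eq_right (not_le.1 h).le]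

theorem continuous_huber (lam : ℝ) : Continuous fun p : Ed d × Ed d => huber lam p.1 p.2 := by
  simp only [huber_eq]
  fun_prop

theorem huber_comm (lam : ℝ) (x y : Ed d) : huber lam x y = huber lam y x := by
  unfold huber
  rw [norm_sub_rev]

theorem huber_le_c2 (lam : ℝ) (x y : Ed d) : huber lam x y ≤ c2 x y := by
  rw [huber_eq, c2]
  nlinarith [sq_nonneg (‖x - y‖ - min ‖x - y‖ lam)]

/-- The Huber cost is `λ`-Lipschitz: with `r = |x-y|`, it equals
`max_{0 ≤ m ≤ λ} (m r - m²/2)`, the maximum being attained at `m = min r λ`. -/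
theorem huber_sub_le (hlam : 0 < lam) (x x' y : Ed d) :
    huber lam x y ≤ huber lam x' y + lam * dist x x' := by
  rw [huber_eq, huber_eq]
  have h3 : ‖x - y‖ ≤ ‖x' - y‖ + dist x x' := by
    rw [dist_eq_norm]
    calc ‖x - y‖ = ‖(x' - y) + (x - x')‖ := by congr 1; abel
      _ ≤ _ := norm_add_le _ _
  have hs := norm_nonneg (x' - y)
  have hD := dist_nonneg (x := x) (y := x')
  set m := min ‖x - y‖ lam with hm
  have hm0 : 0 ≤ m := le_min (norm_nonneg _) hlam.le
  have hm1 : m ≤ lam := min_le_right _ _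
  have h1 : m * ‖x - y‖ ≤ m * ‖x' - y‖ + lam * dist x x' := by
    nlinarith [mul_le_mul_of_nonneg_left h3 hm0, mul_le_mul_of_nonneg_right hm1 hD]
  have h2 : m * ‖x' - y‖ - m ^ 2 / 2 ≤
      min ‖x' - y‖ lam * ‖x' - y‖ - min ‖x' - y‖ lam ^ 2 / 2 := by
    rcases le_total ‖x' - y‖ lam with h | h
    · rw [min_eq_left h]
      nlinarith [sq_nonneg (‖x' - y‖ - m)]
    · rw [min_eq_right h]
      nlinarith
  linarith

/-- The point of the segment `[x,z]` at distance `min |x-z| λ` from `x`. For `x = z` the quotient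
is `λ / 0 = 0` and the point is `x`. -/
def midPt (lam : ℝ) (x z : Ed d) : Ed d := x + min 1 (lam / ‖x - z‖) • (z - x)

theorem measurable_midPt (lam : ℝ) : Measurable fun p : Ed d × Ed d => midPt lam p.1 p.2 := by
  unfold midPt
  fun_prop

theorem midPt_mem (hconv : Convex ℝ Ω) (hlam : 0 < lam) {x z : Ed d} (hx : x ∈ Ω) (hz : z ∈ Ω) :
    midPt lam x z ∈ Ω :=
  hconv.add_smul_sub_mem hx hz ⟨le_min zero_le_one (by positivity), min_le_left _ _⟩

/-- The Huber cost is the infimal convolution of `c₂` and `λ|·|`, attained at `midPt`. -/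
theorem midPt_cost (hlam : 0 < lam) (x z : Ed d) :
    c2 x (midPt lam x z) + lam * ‖midPt lam x z - z‖ = huber lam x z := by
  have ht0 : 0 ≤ min 1 (lam / ‖x - z‖) := le_min zero_le_one (by positivity)
  have ht1 : min 1 (lam / ‖x - z‖) ≤ 1 := min_le_left _ _
  have h1 : ‖x - midPt lam x z‖ = min 1 (lam / ‖x - z‖) * ‖x - z‖ := by
    rw [show x - midPt lam x z = min 1 (lam / ‖x - z‖) • (x - z) by unfold midPt; module,
      norm_smul, Real.norm_eq_abs, abs_of_nonneg ht0]
  have h2 : ‖midPt lam x z - z‖ = (1 - min 1 (lam / ‖x - z‖)) * ‖x - z‖ := by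
    rw [show midPt lam x z - z = (1 - min 1 (lam / ‖x - z‖)) • (x - z) by unfold midPt; module,
      norm_smul, Real.norm_eq_abs, abs_of_nonneg (by linarith)]
  rw [c2, h1, h2]
  unfold huber
  rcases (norm_nonneg (x - z)).eq_or_lt with h0 | h0
  · simp [← h0, hlam.le]
  split_ifs with h
  · rw [min_eq_left ((one_le_div h0).2 h)]
    ring
  · rw [min_eq_right ((div_le_one h0).2 (not_le.1 h).le)]
    field_simp
    ring

theorem continuous_norm_sub : Continuous fun p : Ed d × Ed d => ‖p.1 - p.2‖ := by fun_prop

/-- Every plan `γ` from `μ` to `ν` yields a WROF competitor, the image of `γ` under `midPt`, whose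
energy is at most the Huber cost of `γ`. -/
theorem exists_wrof_le_huber (hΩ : IsCompact Ω) (hconv : Convex ℝ Ω) (hlam : 0 < lam)
    (hμ : ProbOn Ω μ) (hν : ProbOn Ω ν) {γ : Measure (Ed d × Ed d)} (hγ : IsCoupling μ ν γ) :
    ∃ ρ, ProbOn Ω ρ ∧ wrof lam μ ν ρ ≤ ∫ p, huber lam p.1 p.2 ∂γ := by
  have := hγ.prob hμ
  have hm := measurable_midPt (d := d) lam
  have hm1 : Measurable fun p : Ed d × Ed d => (p.1, midPt lam p.1 p.2) := measurable_fst.prodMk hm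
  have hm2 : Measurable fun p : Ed d × Ed d => (midPt lam p.1 p.2, p.2) := hm.prodMk measurable_snd
  set ρ := γ.map fun p => midPt lam p.1 p.2 with hρ
  have hρP : ProbOn Ω ρ := by
    refine ⟨Measure.isProbabilityMeasure_map hm.aemeasurable, ?_⟩
    rw [hρ, Measure.map_apply hm hΩ.measurableSet.compl]
    have hmem : ∀ᵐ p ∂γ, midPt lam p.1 p.2 ∈ Ω := by
      filter_upwards [hγ.ae_mem hμ hν] with p hp using midPt_mem hconv hlam hp.1 hp.2
    exact ae_iff.1 hmem
  have hc1 : IsCoupling μ ρ (γ.map fun p => (p.1, midPt lam p.1 p.2)) := by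
    refine ⟨?_, ?_⟩
    · rw [Measure.map_map measurable_fst hm1]
      exact hγ.1
    · rw [Measure.map_map measurable_snd hm1]
      rfl
  have hc2 : IsCoupling ρ ν (γ.map fun p => (midPt lam p.1 p.2, p.2)) := by
    refine ⟨?_, ?_⟩
    · rw [Measure.map_map measurable_fst hm2]
      rfl
    · rw [Measure.map_map measurable_snd hm2]
      exact hγ.2
  refine ⟨ρ, hρP, ?_⟩
  have i1 : Integrable (fun p => c2 p.1 (midPt lam p.1 p.2)) γ :=
    (hc1.integrable hΩ hμ hρP continuous_c2).comp_measurable hm1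
  have i2 : Integrable (fun p => ‖midPt lam p.1 p.2 - p.2‖) γ :=
    (hc2.integrable hΩ hρP hν (c := fun x y => ‖x - y‖) continuous_norm_sub).comp_measurable hm2
  have e1 := tCost_le hΩ hμ hρP continuous_c2 hc1
  have e2 := tCost_le hΩ hρP hν (c := fun x y => ‖x - y‖) continuous_norm_sub hc2
  rw [integral_map hm1.aemeasurable continuous_c2.aestronglyMeasurable] at e1
  rw [integral_map hm2.aemeasurable continuous_norm_sub.aestronglyMeasurable] at e2
  have e3 : ∫ p, huber lam p.1 p.2 ∂γ = (∫ p, c2 p.1 (midPt lam p.1 p.2) ∂γ) +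
      lam * ∫ p, ‖midPt lam p.1 p.2 - p.2‖ ∂γ := by
    rw [← integral_const_mul, ← integral_add i1 (i2.const_mul lam)]
    exact integral_congr_ae (Eventually.of_forall fun p => (midPt_cost hlam p.1 p.2).symm)
  rw [e3, wrof, W2sq_half]
  exact add_le_add e1 (mul_le_mul_of_nonneg_left e2 hlam.le)

/-- For `λ`-Lipschitz `φ`, the pair `(φ^{c₂}, φ)` is admissible in the dual of the Huber problem. -/
theorem ctrans_add_le_huber (hΩ : IsCompact Ω) (hconv : Convex ℝ Ω) (hlam : 0 < lam)
    (hφ : LipschitzOnWith (Real.toNNReal lam) φ Ω) :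
    ∀ x ∈ Ω, ∀ z ∈ Ω, ctrans c2 Ω φ x + φ z ≤ huber lam x z := by
  intro x hx z hz
  have hy := midPt_mem hconv hlam hx hz
  have h1 := ctrans_le hΩ continuous_c2 hφ.continuousOn x hy
  have h2 := hφ.dist_le_mul _ hy z hz
  rw [Real.dist_eq, dist_eq_norm, Real.coe_toNNReal _ hlam.le] at h2
  have h3 := (abs_le.1 h2).1
  have h4 := midPt_cost hlam x z
  linarith

/-- Kantorovich duality for the Huber cost, in terms of the dual problem over `λ`-Lipschitz
functions: if `(f, g)` is admissible for the Huber cost, the Huber transform `ψ` of `f` is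
`λ`-Lipschitz with `g ≤ ψ`, and `f ≤ ψ^{c₂}` because the Huber cost is at most `c₂`. -/
theorem exists_huber_plan_le_dual (hΩ : IsCompact Ω) (hlam : 0 < lam)
    (hμ : ProbOn Ω μ) (hν : ProbOn Ω ν) (hφ : DualSol Ω lam μ ν φ) :
    ∃ γ, IsCoupling μ ν γ ∧
      ∫ p, huber lam p.1 p.2 ∂γ ≤ (∫ x, ctrans c2 Ω φ x ∂μ) + ∫ x, φ x ∂ν := by
  have hne := hμ.nonempty
  obtain ⟨γ, hγ, h⟩ := exists_coupling_dual hΩ hμ hν (continuous_huber lam)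
  refine ⟨γ, hγ, le_of_forall_pos_le_add fun ε hε => ?_⟩
  obtain ⟨f, g, hf, hg, hfg, hle⟩ := h ε hε
  have hψ : LipschitzOnWith (Real.toNNReal lam) (ctrans (huber lam) Ω f) Ω := by
    refine lipschitzOn_ctrans hΩ hne (continuous_huber lam) hf fun y _ x _ x' _ => ?_
    rw [Real.coe_toNNReal _ hlam.le]
    exact huber_sub_le hlam x x' y
  have h1 : ∀ x ∈ Ω, g x ≤ ctrans (huber lam) Ω f x := by
    intro x hx
    obtain ⟨y, hy, e, -⟩ := exists_ctrans_eq hΩ hne (continuous_huber lam) hf x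
    have := hfg y hy x hx
    rw [huber_comm] at this
    linarith
  have h2 : ∀ x ∈ Ω, f x ≤ ctrans c2 Ω (ctrans (huber lam) Ω f) x := by
    intro x hx
    obtain ⟨y, hy, e, -⟩ := exists_ctrans_eq hΩ hne continuous_c2 hψ.continuousOn x
    have h3 := ctrans_le hΩ (continuous_huber lam) hf y hx
    have h4 := huber_le_c2 lam x y
    rw [huber_comm] at h4
    linarith
  have h3 : ∫ x, g x ∂ν ≤ ∫ x, ctrans (huber lam) Ω f x ∂ν :=
    integral_mono_ae (hν.integrable hΩ hg) (hν.integrable hΩ hψ.continuousOn)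
      (hν.ae_mem.mono h1)
  have h4 : ∫ x, f x ∂μ ≤ ∫ x, ctrans c2 Ω (ctrans (huber lam) Ω f) x ∂μ :=
    integral_mono_ae (hμ.integrable hΩ hf)
      (hμ.integrable hΩ (continuousOn_ctrans_c2 hΩ hne hψ.continuousOn)) (hμ.ae_mem.mono h2)
  have := hφ.2 _ hψ
  linarith

end Huber

/-- The dual problem has a solution: the dual functional is invariant under adding constants and
continuous for uniform convergence, and the `λ`-Lipschitz functions vanishing at a base point form a
compact set by Arzelà–Ascoli. -/
theorem exists_dualSol {Ω : Set (Ed d)} (hΩ : IsCompact Ω) {μ ν : Measure (Ed d)} (lam : ℝ)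
    (hμ : ProbOn Ω μ) (hν : ProbOn Ω ν) : ∃ φ, DualSol Ω lam μ ν φ := by
  have hne := hμ.nonempty
  obtain ⟨x₀, hx₀⟩ := id hne
  have : CompactSpace Ω := isCompact_iff_compactSpace.1 hΩ
  have := hμ.1
  have := hν.1
  set L := Real.toNNReal lam
  let G : (Ed d → ℝ) → ℝ := fun φ => (∫ x, ctrans c2 Ω φ x ∂μ) + ∫ x, φ x ∂ν
  -- one-sided uniform bounds on `φ - ψ` and `ψ - φ` control the dual functional
  have hG : ∀ {φ ψ : Ed d → ℝ} {a b : ℝ}, ContinuousOn φ Ω → ContinuousOn ψ Ω →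
      (∀ y ∈ Ω, φ y ≤ ψ y + a) → (∀ y ∈ Ω, ψ y ≤ φ y + b) → G ψ ≤ G φ + a + b := by
    intro φ ψ a b hφ hψ ha hb
    have h1 : ∫ x, ctrans c2 Ω ψ x ∂μ ≤ (∫ x, ctrans c2 Ω φ x ∂μ) + a := by
      have hi := hμ.integrable hΩ (continuousOn_ctrans_c2 hΩ hne hφ)
      have := integral_mono (hμ.integrable hΩ (continuousOn_ctrans_c2 hΩ hne hψ))
        (hi.add (integrable_const a))
        (fun x => ctrans_anti hΩ hne continuous_c2 hφ hψ ha x)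
      simp only [Pi.add_apply] at this
      rwa [integral_add hi (integrable_const a), integral_const, probReal_univ, one_smul] at this
    have h2 : ∫ x, ψ x ∂ν ≤ (∫ x, φ x ∂ν) + b := by
      have hi := hν.integrable hΩ hφ
      have := integral_mono_ae (hν.integrable hΩ hψ)
        (hi.add (integrable_const b)) (hν.ae_mem.mono hb)
      simp only [Pi.add_apply] at this
      rwa [integral_add hi (integrable_const b), integral_const, probReal_univ, one_smul] at this
    simp only [G]
    linarith
  let ext : (Ω → ℝ) → Ed d → ℝ := fun f => Function.extend Subtype.val f 0
  have hext : ∀ (f : Ω → ℝ) (x : Ω), ext f x = f x := fun f x =>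
    Subtype.val_injective.extend_apply _ _ _
  have hextc : ∀ f : Ω → ℝ, Continuous f → ContinuousOn (ext f) Ω := by
    intro f hf
    rw [continuousOn_iff_continuous_domRestrict]
    exact hf.congr fun x => (hext f x).symm
  let A : Set (BoundedContinuousFunction Ω ℝ) := {f | LipschitzWith L f ∧ f ⟨x₀, hx₀⟩ = 0}
  have hAcl : IsClosed A := by
    have hev : ∀ x : Ω, Continuous fun f : BoundedContinuousFunction Ω ℝ => f x := fun x =>
      continuous_eval_const x
    have hA : A = (⋂ (x : Ω) (y : Ω), {f | dist (f x) (f y) ≤ L * dist x y}) ∩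
        {f | f ⟨x₀, hx₀⟩ = 0} := by
      ext f
      simp [A, lipschitzWith_iff_dist_le_mul]
    rw [hA]
    refine IsClosed.inter (isClosed_iInter fun x => isClosed_iInter fun y => ?_) ?_
    · exact isClosed_le ((hev x).dist (hev y)) continuous_const
    · exact isClosed_eq (hev _) continuous_const
  obtain ⟨R, hR⟩ := hΩ.isBounded.subset_closedBall x₀
  have hAc : IsCompact A := by
    refine BoundedContinuousFunction.arzela_ascoli₂ (Metric.closedBall 0 (L * R))
      (isCompact_closedBall _ _) A hAcl ?_ ?_
    · intro f x hf
      rw [Metric.mem_closedBall, ← hf.2]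
      refine (hf.1.dist_le_mul x ⟨x₀, hx₀⟩).trans ?_
      exact mul_le_mul_of_nonneg_left (hR x.2) L.2
    · exact (LipschitzWith.uniformEquicontinuous _ L fun f => f.2.1).equicontinuous
  have hFc : Continuous fun f : BoundedContinuousFunction Ω ℝ => G (ext f) := by
    refine (LipschitzWith.of_le_add_mul 2 fun f g => ?_).continuous
    have hd : ∀ (f g : BoundedContinuousFunction Ω ℝ), ∀ y ∈ Ω, ext f y ≤ ext g y + dist f g := by
      intro f g y hy
      have h1 := hext f ⟨y, hy⟩
      have h2 := hext g ⟨y, hy⟩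
      simp only at h1 h2
      rw [h1, h2]
      have := (le_abs_self _).trans_eq (Real.dist_eq (f ⟨y, hy⟩) (g ⟨y, hy⟩)).symm
      have := BoundedContinuousFunction.dist_coe_le_dist (f := f) (g := g) ⟨y, hy⟩
      linarith
    have := hG (hextc g g.continuous) (hextc f f.continuous)
      (fun y hy => hd g f y hy) (fun y hy => hd f g y hy)
    rw [dist_comm g f] at this
    simp only [NNReal.coe_ofNat]
    linarith
  obtain ⟨f, hfA, hmax⟩ := hAc.exists_isMaxOn
    ⟨0, LipschitzWith.const' (0 : ℝ), by simp⟩ hFc.continuousOn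
  refine ⟨ext f, ?_, fun ψ hψ => ?_⟩
  · rw [lipschitzOnWith_iff_restrict]
    convert hfA.1 using 1
    ext x
    exact hext f x
  · -- normalising `ψ` to vanish at `x₀` does not change the dual value
    have hψL : LipschitzWith L fun x : Ω => ψ x - ψ x₀ := by
      refine LipschitzWith.of_dist_le_mul fun x y => ?_
      rw [dist_sub_right]
      exact hψ.dist_le_mul x x.2 y y.2
    let g : BoundedContinuousFunction Ω ℝ :=
      BoundedContinuousFunction.mkOfCompact ⟨fun x => ψ x - ψ x₀, hψL.continuous⟩
    have hgA : g ∈ A := ⟨hψL, sub_self _⟩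
    have h1 : G (ext g) ≤ G (ext f) := hmax hgA
    have hge : ∀ y ∈ Ω, ext g y = ψ y - ψ x₀ := fun y hy => hext g ⟨y, hy⟩
    have h2 : G ψ ≤ G (ext g) + (-ψ x₀) + ψ x₀ :=
      hG (hextc g g.continuous) hψ.continuousOn
        (fun y hy => by rw [hge y hy]; linarith) (fun y hy => by rw [hge y hy]; linarith)
    have h3 : G ψ ≤ G (ext f) := by linarith
    exact h3

/-! ### Optimality conditions and the transport map -/

section Primal

variable {Ω : Set (Ed d)} {μ ν ρ : Measure (Ed d)} {φ : Ed d → ℝ} {lam : ℝ}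

theorem integral_sub_le_W1 (hΩ : IsCompact Ω) (hρ : ProbOn Ω ρ) (hν : ProbOn Ω ν) {K : NNReal}
    (hφ : LipschitzOnWith K φ Ω) : (∫ x, φ x ∂ν) - ∫ x, φ x ∂ρ ≤ K * W1 ρ ν := by
  obtain ⟨γ, hγ, e⟩ := exists_optimalPlan hΩ hρ hν (c := fun x y => ‖x - y‖) continuous_norm_sub
  have := hγ.1.le_integral hΩ hρ hν (f := fun x => -φ x) hφ.continuousOn.neg hφ.continuousOn
    (c := fun x y => K * ‖x - y‖) (continuous_const.mul continuous_norm_sub) (by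
      intro x hx y hy
      have h2 := hφ.dist_le_mul x hx y hy
      rw [Real.dist_eq, dist_eq_norm] at h2
      have h3 := (abs_le.1 h2).1
      linarith)
  rw [integral_const_mul, integral_neg] at this
  rw [W1, e]
  linarith

theorem W1_pos (hΩ : IsCompact Ω) (hρ : ProbOn Ω ρ) (hν : ProbOn Ω ν) (hne : ρ ≠ ν) :
    0 < W1 ρ ν := by
  obtain ⟨γ, hγ, e⟩ := exists_optimalPlan hΩ hρ hν (c := fun x y => ‖x - y‖) continuous_norm_sub
  rw [W1, e]
  refine (integral_nonneg fun p => norm_nonneg _).lt_of_ne' fun h0 => hne ?_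
  have hi := hγ.1.integrable hΩ hρ hν (c := fun x y => ‖x - y‖) continuous_norm_sub
  have h1 := (integral_eq_zero_iff_of_nonneg (fun p => norm_nonneg _) hi).1 h0
  rw [← hγ.1.1, ← hγ.1.2]
  refine Measure.map_congr ?_
  filter_upwards [h1] with p hp
  simpa [sub_eq_zero] using hp

theorem W1_self_le (hΩ : IsCompact Ω) (hν : ProbOn Ω ν) : W1 ν ν ≤ 0 := by
  have hm : Measurable fun x : Ed d => (x, x) := measurable_id.prodMk measurable_id
  have hγ : IsCoupling ν ν (ν.map fun x => (x, x)) := by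
    refine ⟨?_, ?_⟩
    · rw [Measure.map_map measurable_fst hm]
      exact Measure.map_id
    · rw [Measure.map_map measurable_snd hm]
      exact Measure.map_id
  refine (tCost_le hΩ hν hν continuous_norm_sub hγ).trans ?_
  rw [integral_map hm.aemeasurable continuous_norm_sub.aestronglyMeasurable]
  simp

theorem ctrans_add_le_c2 (hΩ : IsCompact Ω) (hφ : ContinuousOn φ Ω) :
    ∀ x ∈ Ω, ∀ y ∈ Ω, ctrans c2 Ω φ x + φ y ≤ c2 x y := by
  intro x _ y hy
  have := ctrans_le hΩ continuous_c2 hφ x hy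
  linarith

theorem integral_add_le_W2 (hΩ : IsCompact Ω) (hμ : ProbOn Ω μ) (hρ : ProbOn Ω ρ)
    (hφ : ContinuousOn φ Ω) : (∫ x, ctrans c2 Ω φ x ∂μ) + ∫ x, φ x ∂ρ ≤ W2sq μ ρ / 2 := by
  rw [W2sq_half]
  exact le_tCost hΩ hμ hρ continuous_c2 (continuousOn_ctrans_c2 hΩ hμ.nonempty hφ) hφ
    (ctrans_add_le_c2 hΩ hφ)

/-- Weak duality for the WROF problem. -/
theorem dual_le_wrof (hΩ : IsCompact Ω) (hlam : 0 < lam) (hμ : ProbOn Ω μ) (hν : ProbOn Ω ν)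
    (hρ : ProbOn Ω ρ) (hφ : LipschitzOnWith (Real.toNNReal lam) φ Ω) :
    (∫ x, ctrans c2 Ω φ x ∂μ) + ∫ x, φ x ∂ν ≤ wrof lam μ ν ρ := by
  have h1 := integral_add_le_W2 hΩ hμ hρ hφ.continuousOn
  have h2 := integral_sub_le_W1 hΩ hρ hν hφ
  rw [Real.coe_toNNReal _ hlam.le] at h2
  unfold wrof
  linarith

/-- Optimality conditions. The energy of `ρ` is at most the dual value of `φ`, through a Huber plan
and the competitor it induces; hence both weak duality inequalities are equalities. -/
theorem optimality (hΩ : IsCompact Ω) (hconv : Convex ℝ Ω) (hlam : 0 < lam) (hμ : ProbOn Ω μ)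
    (hν : ProbOn Ω ν) (hρ : ProbOn Ω ρ)
    (hmin : ∀ ρ', ProbOn Ω ρ' → wrof lam μ ν ρ ≤ wrof lam μ ν ρ') (hφ : DualSol Ω lam μ ν φ) :
    (∫ x, ctrans c2 Ω φ x ∂μ) + ∫ x, φ x ∂ρ = W2sq μ ρ / 2 ∧
      (∫ x, φ x ∂ν) - ∫ x, φ x ∂ρ = lam * W1 ρ ν := by
  have h1 := integral_add_le_W2 hΩ hμ hρ hφ.1.continuousOn
  have h2 := integral_sub_le_W1 hΩ hρ hν hφ.1
  rw [Real.coe_toNNReal _ hlam.le] at h2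
  obtain ⟨γ, hγ, hle⟩ := exists_huber_plan_le_dual hΩ hlam hμ hν hφ
  obtain ⟨ρ', hρ', hle'⟩ := exists_wrof_le_huber hΩ hconv hlam hμ hν hγ
  have h3 := hmin ρ' hρ'
  rw [wrof] at h3
  constructor <;> linarith

/-- A plan whose `c₂`-cost is at most the dual value of `φ` is concentrated on the graph of
`I - ∇φ^{c₂}`. -/
theorem plan_ae_graph (hΩ : IsCompact Ω) (hμ : ProbOn Ω μ) (hρ : ProbOn Ω ρ)
    (hac : μ ≪ (volume : Measure (Ed d))) (hφ : ContinuousOn φ Ω) {γ : Measure (Ed d × Ed d)}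
    (hγ : IsCoupling μ ρ γ)
    (hle : ∫ p, c2 p.1 p.2 ∂γ ≤ (∫ x, ctrans c2 Ω φ x ∂μ) + ∫ x, φ x ∂ρ) :
    ∀ᵐ p ∂γ, p.2 = p.1 - gradient (ctrans c2 Ω φ) p.1 := by
  have hd := ae_differentiableAt_ctrans hΩ hμ.nonempty hφ hμ hac
  rw [← hγ.1] at hd
  filter_upwards [ae_of_ae_map measurable_fst.aemeasurable hd, hγ.ae_mem hμ hρ,
    hγ.ae_eq_of_integral_eq hΩ hμ hρ (continuousOn_ctrans_c2 hΩ hμ.nonempty hφ) hφ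
      continuous_c2 (ctrans_add_le_c2 hΩ hφ) hle] with p h1 h2 h3
  exact eq_sub_gradient hΩ hφ h2.2 h1 (by linarith)

theorem plan_eq_map (hΩ : IsCompact Ω) (hμ : ProbOn Ω μ) (hρ : ProbOn Ω ρ)
    (hac : μ ≪ (volume : Measure (Ed d))) (hφ : ContinuousOn φ Ω) {γ : Measure (Ed d × Ed d)}
    (hγ : IsCoupling μ ρ γ)
    (hle : ∫ p, c2 p.1 p.2 ∂γ ≤ (∫ x, ctrans c2 Ω φ x ∂μ) + ∫ x, φ x ∂ρ)
    {T : Ed d → Ed d} (hT : Measurable T)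
    (hTe : ∀ᵐ x ∂μ, T x = x - gradient (ctrans c2 Ω φ) x) :
    γ = μ.map fun x => (x, T x) := by
  have hTe' := hTe
  rw [← hγ.1] at hTe'
  have h1 : ∀ᵐ p ∂γ, p = (p.1, T p.1) := by
    filter_upwards [plan_ae_graph hΩ hμ hρ hac hφ hγ hle,
      ae_of_ae_map measurable_fst.aemeasurable hTe'] with p hp hp'
    exact Prod.ext rfl (hp.trans hp'.symm)
  calc γ = γ.map id := Measure.map_id.symm
    _ = γ.map fun p => (p.1, T p.1) := Measure.map_congr h1
    _ = (γ.map Prod.fst).map fun x => (x, T x) := by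
        rw [Measure.map_map (measurable_id'.prodMk hT) measurable_fst]
        rfl
    _ = _ := by rw [hγ.1]

theorem measurable_sub_gradient (u : Ed d → ℝ) : Measurable fun x => x - gradient u x :=
  measurable_id.sub
    ((InnerProductSpace.toDual ℝ (Ed d)).symm.continuous.measurable.comp (measurable_fderiv ℝ u))

/-- Uniqueness of the WROF solution: every minimiser is the image of `μ` under `I - ∇φ^{c₂}`, for
any dual solution `φ`. -/
theorem minimizer_eq (hΩ : IsCompact Ω) (hconv : Convex ℝ Ω) (hlam : 0 < lam) (hμ : ProbOn Ω μ)
    (hν : ProbOn Ω ν) (hac : μ ≪ (volume : Measure (Ed d))) (hρ : ProbOn Ω ρ)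
    (hmin : ∀ ρ', ProbOn Ω ρ' → wrof lam μ ν ρ ≤ wrof lam μ ν ρ') (hφ : DualSol Ω lam μ ν φ) :
    ρ = μ.map fun x => x - gradient (ctrans c2 Ω φ) x := by
  obtain ⟨γ, hγ, e⟩ := exists_optimalPlan hΩ hμ hρ continuous_c2
  have hT := measurable_sub_gradient (ctrans c2 Ω φ)
  have h := plan_eq_map hΩ hμ hρ hac hφ.1.continuousOn hγ.1
    (by rw [← e, ← W2sq_half, (optimality hΩ hconv hlam hμ hν hρ hmin hφ).1]) hT
    (Eventually.of_forall fun x => rfl)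
  rw [← hγ.1.2, h, Measure.map_map measurable_snd (measurable_id'.prodMk hT)]
  rfl

/-- If `ν ∈ B_λ(μ)`, the energy of `ν` is at most the optimal Huber cost, which is the dual value;
so `ν` is itself a minimiser. -/
theorem eq_of_Bset (hΩ : IsCompact Ω) (hconv : Convex ℝ Ω) (hlam : 0 < lam) (hμ : ProbOn Ω μ)
    (hν : ProbOn Ω ν) (hac : μ ≪ (volume : Measure (Ed d))) (hρ : ProbOn Ω ρ)
    (hmin : ∀ ρ', ProbOn Ω ρ' → wrof lam μ ν ρ ≤ wrof lam μ ν ρ') (hB : Bset lam μ ν) :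
    ρ = ν := by
  obtain ⟨φ, hφ⟩ := exists_dualSol hΩ lam hμ hν
  obtain ⟨γ, hγ, h0⟩ := hB
  obtain ⟨γ', hγ', hle⟩ := exists_huber_plan_le_dual hΩ hlam hμ hν hφ
  have h1 : ∫ p, huber lam p.1 p.2 ∂γ = ∫ p, c2 p.1 p.2 ∂γ := by
    refine integral_congr_ae ?_
    have h2 : ∀ᵐ p ∂γ, ¬ lam < ‖p.1 - p.2‖ := by
      rw [ae_iff]
      simpa using h0
    filter_upwards [h2] with p hp
    rw [huber, if_pos (not_lt.1 hp), c2]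
  have h2 : wrof lam μ ν ν ≤ (∫ x, ctrans c2 Ω φ x ∂μ) + ∫ x, φ x ∂ν := by
    have h3 := tCost_le hΩ hμ hν continuous_c2 hγ.1
    have h4 := hγ.2 γ' hγ'
    have h5 := mul_nonpos_of_nonneg_of_nonpos hlam.le (W1_self_le hΩ hν)
    rw [wrof, W2sq_half]
    linarith
  have hminν : ∀ ρ', ProbOn Ω ρ' → wrof lam μ ν ν ≤ wrof lam μ ν ρ' := fun ρ' hρ' =>
    h2.trans (dual_le_wrof hΩ hlam hμ hν hρ' hφ.1)
  rw [minimizer_eq hΩ hconv hlam hμ hν hac hρ hmin hφ]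
  exact (minimizer_eq hΩ hconv hlam hμ hν hac hν hminν hφ).symm

/-- If `ν` minimises the WROF energy, an optimal `c₂`-plan from `μ` to `ν` moves mass by at most `λ`
and is optimal for the Huber cost. -/
theorem Bset_of_min (hΩ : IsCompact Ω) (hconv : Convex ℝ Ω) (hlam : 0 < lam) (hμ : ProbOn Ω μ)
    (hν : ProbOn Ω ν) (hmin : ∀ ρ', ProbOn Ω ρ' → wrof lam μ ν ν ≤ wrof lam μ ν ρ') :
    Bset lam μ ν := by
  obtain ⟨φ, hφ⟩ := exists_dualSol hΩ lam hμ hν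
  obtain ⟨γ, hγ, e⟩ := exists_optimalPlan hΩ hμ hν continuous_c2
  have hφc := hφ.1.continuousOn
  have hu := continuousOn_ctrans_c2 hΩ hμ.nonempty hφc
  have hle : ∫ p, c2 p.1 p.2 ∂γ ≤ (∫ x, ctrans c2 Ω φ x ∂μ) + ∫ x, φ x ∂ν := by
    rw [← e, ← W2sq_half, (optimality hΩ hconv hlam hμ hν hν hmin hφ).1]
  refine ⟨γ, ⟨hγ.1, fun γ' hγ' => ?_⟩, ?_⟩
  · refine (integral_mono (hγ.1.integrable hΩ hμ hν (continuous_huber lam))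
      (hγ.1.integrable hΩ hμ hν continuous_c2) fun p => huber_le_c2 lam p.1 p.2).trans ?_
    exact hle.trans (hγ'.le_integral hΩ hμ hν hu hφc (continuous_huber lam)
      (ctrans_add_le_huber hΩ hconv hlam hφ.1))
  · have h1 : ∀ᵐ p ∂γ, ¬ lam < ‖p.1 - p.2‖ := by
      filter_upwards [hγ.1.ae_mem hμ hν, hγ.1.ae_eq_of_integral_eq hΩ hμ hν hu hφc continuous_c2
        (ctrans_add_le_c2 hΩ hφc) hle] with p hp he
      refine not_lt.2 (norm_sub_le_of_min hconv hlam hφ.1 hp.1 hp.2 fun z hz => ?_)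
      have := ctrans_le hΩ continuous_c2 hφc p.1 hz
      linarith
    rw [ae_iff] at h1
    simpa using h1

theorem optimalMap_of_dualSol (hΩ : IsCompact Ω) (hconv : Convex ℝ Ω) (hlam : 0 < lam)
    (hμ : ProbOn Ω μ) (hν : ProbOn Ω ν) (hac : μ ≪ (volume : Measure (Ed d))) (hρ : ProbOn Ω ρ)
    (hmin : ∀ ρ', ProbOn Ω ρ' → wrof lam μ ν ρ ≤ wrof lam μ ν ρ') (hφ : DualSol Ω lam μ ν φ)
    {T : Ed d → Ed d} (hT : Measurable T)
    (hTe : ∀ᵐ x ∂μ, T x = x - gradient (ctrans c2 Ω φ) x) :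
    IsOptimalMap c2 μ ρ T ∧ (∀ T' : Ed d → Ed d, IsOptimalMap c2 μ ρ T' → T' =ᵐ[μ] T) ∧
      ∀ᵐ x ∂μ, ‖x - T x‖ ≤ lam := by
  have hφc := hφ.1.continuousOn
  obtain ⟨γ, hγ, e⟩ := exists_optimalPlan hΩ hμ hρ continuous_c2
  have hle : ∫ p, c2 p.1 p.2 ∂γ ≤ (∫ x, ctrans c2 Ω φ x ∂μ) + ∫ x, φ x ∂ρ := by
    rw [← e, ← W2sq_half, (optimality hΩ hconv hlam hμ hν hρ hmin hφ).1]
  have hm : Measurable fun x => (x, T x) := measurable_id.prodMk hT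
  have hγT := plan_eq_map hΩ hμ hρ hac hφc hγ.1 hle hT hTe
  refine ⟨⟨hT.aemeasurable, ?_, fun γ' hγ' => ?_⟩, fun T' hT' => ?_, ?_⟩
  · rw [← hγ.1.2, hγT, Measure.map_map measurable_snd hm]
    rfl
  · have h1 := hγ.2 γ' hγ'
    rwa [hγT, integral_map hm.aemeasurable continuous_c2.aestronglyMeasurable] at h1
  · obtain ⟨hT'm, hT'ρ, hT'o⟩ := hT'
    have hm' : AEMeasurable (fun x => (x, T' x)) μ := aemeasurable_id.prodMk hT'm
    have hγ' : IsCoupling μ ρ (μ.map fun x => (x, T' x)) := by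
      refine ⟨?_, ?_⟩
      · rw [AEMeasurable.map_map_of_aemeasurable measurable_fst.aemeasurable hm']
        exact Measure.map_id
      · rw [AEMeasurable.map_map_of_aemeasurable measurable_snd.aemeasurable hm']
        exact hT'ρ
    have h1 := plan_ae_graph hΩ hμ hρ hac hφc hγ' (by
      rw [integral_map hm' continuous_c2.aestronglyMeasurable]
      exact (hT'o γ hγ.1).trans hle)
    filter_upwards [ae_of_ae_map hm' h1, hTe] with x hx hx'
    exact hx.trans hx'.symm
  · filter_upwards [hTe, ae_differentiableAt_ctrans hΩ hμ.nonempty hφc hμ hac, hμ.ae_mem]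
      with x hx hd hxΩ
    obtain ⟨y, hy, he, hymin⟩ := exists_ctrans_eq hΩ hμ.nonempty continuous_c2 hφc x
    rw [hx, ← eq_sub_gradient hΩ hφc hy hd he]
    exact norm_sub_le_of_min hconv hlam hφ.1 hxΩ hy hymin

end Primal

/-- Main theorem, part 1: dichotomy and properties of `T_λ`. Under the
hypotheses of Statement 2, with `ρ_λ` the unique WROF solution: if `ν ∈ B_λ(μ)` then
`ρ_λ = ν`; if `ν ∉ B_λ(μ)` then `ρ_λ ≠ ν` and any dual solution `φ_λ` lies in
`∂((1/2)W₂²(·,μ))(ρ_λ)`, has Lipschitz constant exactly `λ`, and satisfies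
`∫ φ_λ d(ν - ρ_λ) = λ W₁(ρ_λ, ν)`. Moreover `T_λ` (μ-a.e. equal to `I - ∇φ_λ^{c₂}`) is the
unique optimal transport map for `W₂(μ, ρ_λ)` and `‖I - T_λ‖_{L∞(μ)} ≤ λ`. -/
theorem stmt3 (d : ℕ) (Ω : Set (Ed d)) (hΩc : IsCompact Ω) (hΩconv : Convex ℝ Ω)
    (hΩint : volume (interior Ω) ≠ 0)
    (μ ν : Measure (Ed d)) (hμ : ProbOn Ω μ) (hν : ProbOn Ω ν)
    (hμac : μ ≪ (volume : Measure (Ed d)))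
    (lam : ℝ) (hlam : 0 < lam)
    (ρlam : Measure (Ed d)) (hρP : ProbOn Ω ρlam)
    (hρmin : ∀ ρ, ProbOn Ω ρ → wrof lam μ ν ρlam ≤ wrof lam μ ν ρ) :
    -- dichotomy, case 1:
    (Bset lam μ ν → ρlam = ν) ∧
    -- dichotomy, case 2:
    (¬ Bset lam μ ν →
      ρlam ≠ ν ∧
      ∀ φlam : Ed d → ℝ, DualSol Ω lam μ ν φlam →
        InSubdiffW2 Ω μ ρlam φlam ∧
        LipschitzOnWith (Real.toNNReal lam) φlam Ω ∧
        (∀ c : NNReal, LipschitzOnWith c φlam Ω → Real.toNNReal lam ≤ c) ∧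
        (∫ x, φlam x ∂ν) - ∫ x, φlam x ∂ρlam = lam * W1 ρlam ν) ∧
    -- `T_λ` is the unique optimal transport map for `W₂(μ,ρ_λ)`, with `‖I-T_λ‖_{L∞(μ)} ≤ λ`:
    (∀ φlam : Ed d → ℝ, DualSol Ω lam μ ν φlam →
      ∀ T : Ed d → Ed d, Measurable T →
        (∀ᵐ x ∂μ, T x = x - gradient (ctrans c2 Ω φlam) x) →
        IsOptimalMap c2 μ ρlam T ∧
        (∀ T' : Ed d → Ed d, IsOptimalMap c2 μ ρlam T' → T' =ᵐ[μ] T) ∧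
        ∀ᵐ x ∂μ, ‖x - T x‖ ≤ lam) := by
  refine ⟨eq_of_Bset hΩc hΩconv hlam hμ hν hμac hρP hρmin, fun hB => ?_,
    fun φ hφ T hT hTe => optimalMap_of_dualSol hΩc hΩconv hlam hμ hν hμac hρP hρmin hφ hT hTe⟩
  have hne : ρlam ≠ ν := by
    rintro rfl
    exact hB (Bset_of_min hΩc hΩconv hlam hμ hν hρmin)
  refine ⟨hne, fun φ hφ => ?_⟩
  obtain ⟨h1, h2⟩ := optimality hΩc hΩconv hlam hμ hν hρP hρmin hφ
  refine ⟨⟨hφ.1.continuousOn, by rw [h1, W2sq_comm]⟩, hφ.1, fun c hc => ?_, h2⟩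
  -- a Lipschitz constant `c` gives `λ W₁(ρ,ν) ≤ c W₁(ρ,ν)`, and `W₁(ρ,ν) > 0`
  have h3 := integral_sub_le_W1 hΩc hρP hν hc
  rw [h2] at h3
  rw [Real.toNNReal_le_iff_le_coe]
  exact le_of_mul_le_mul_right h3 (W1_pos hΩc hρP hν hne)
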